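/- arXiv:1209.0213 — 2 statements merged into one kernel-verified Lean document; each statement's English description precedes it below -/
import Mathlib

section
/- Let ℓ ∈ ℕ and let F : ℝ × ℝ → ℝ be a smooth solution of the ℓ-mode wave equation ∂²F/∂t² = ∂²F/∂x² − W_ℓ(x)·F for which there exists R > 0 such that F(t,x) = 0 whenever |x| ≥ R + |t|. Then there exists a constant C, depending only on F, such that |F(t,x)| ≤ C for all (t,x) ∈ ℝ × ℝ. -/
/-!
Conservation of the energy `∫ (F_t² + F_x² + W F²)` bounds `∫ F_x²` uniformly in time, but it does
not bound `∫ F²`, because `W` may decay at infinity. To gain a bound on `∫ F²`, pass to the time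
primitive `G = ∫₀ᵗ F dτ`, which satisfies the same equation with the time-independent, compactly
supported source `g = F_t(0, ·)`. The conserved energy of `G` is `∫ (F² + G_x² + W G² - 2 g G)`,
and since `sup_{supp g} G² ≤ c ∫ (G_x² + W G²)` as soon as `W ≥ 0` is not identically zero, the
indefinite term `2 g G` is absorbed up to a constant. The pointwise bound is then the
one-dimensional Sobolev inequality `F(t, x)² ≤ ∫ (F² + F_x²)`.
-/

/-- The tortoise radial coordinate `s(ρ) = ρ - m²/ρ + 2m·log(ρ/m)`. -/
noncomputable def tortoise (m ρ : ℝ) : ℝ := ρ - m ^ 2 / ρ + 2 * m * Real.log (ρ / m)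

/-- The potential `V₁(ρ) = 2mρ³/(ρ+m)⁶`. -/
noncomputable def V1 (m ρ : ℝ) : ℝ := 2 * m * ρ ^ 3 / (ρ + m) ^ 6

/-- The potential `V₂(ρ) = ρ²/(ρ+m)⁴`. -/
noncomputable def V2 (m ρ : ℝ) : ℝ := ρ ^ 2 / (ρ + m) ^ 4

open Function MeasureTheory Set

section PartialDerivatives

variable {E : Type*} [NormedAddCommGroup E] [NormedSpace ℝ E] {u : ℝ → ℝ → E}

/-- The partial derivative `∂ₜu` of a function `u t x` of time and position, curried like `u`. -/
noncomputable def timeDeriv (u : ℝ → ℝ → E) (t x : ℝ) : E := deriv (fun τ => u τ x) t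

/-- The partial derivative `∂ₓu` of a function `u t x` of time and position, curried like `u`. -/
noncomputable def spaceDeriv (u : ℝ → ℝ → E) (t x : ℝ) : E := deriv (u t) x

lemma hasDerivAt_timeDeriv (hu : Differentiable ℝ (uncurry u)) (t x : ℝ) :
    HasDerivAt (fun τ => u τ x) (timeDeriv u t x) t :=
  (hu.comp (by fun_prop : Differentiable ℝ fun τ : ℝ => (τ, x)) t).hasDerivAt

lemma hasDerivAt_spaceDeriv (hu : Differentiable ℝ (uncurry u)) (t x : ℝ) :
    HasDerivAt (u t) (spaceDeriv u t x) x :=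
  (hu.comp (by fun_prop : Differentiable ℝ fun y : ℝ => (t, y)) x).hasDerivAt

lemma uncurry_timeDeriv (hu : Differentiable ℝ (uncurry u)) :
    uncurry (timeDeriv u) = fun p => fderiv ℝ (uncurry u) p (1, 0) := by
  ext ⟨t, x⟩
  exact ((hu (t, x)).hasFDerivAt.comp_hasDerivAt (f := fun τ : ℝ => (τ, x)) t
    ((hasDerivAt_id t).prodMk (hasDerivAt_const t x))).deriv

lemma uncurry_spaceDeriv (hu : Differentiable ℝ (uncurry u)) :
    uncurry (spaceDeriv u) = fun p => fderiv ℝ (uncurry u) p (0, 1) := by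
  ext ⟨t, x⟩
  exact ((hu (t, x)).hasFDerivAt.comp_hasDerivAt (f := fun y : ℝ => (t, y)) x
    ((hasDerivAt_const x t).prodMk (hasDerivAt_id x))).deriv

lemma contDiff_timeDeriv {n : ℕ} (hu : ContDiff ℝ (n + 1) (uncurry u)) :
    ContDiff ℝ n (uncurry (timeDeriv u)) := by
  rw [uncurry_timeDeriv (hu.differentiable (by simp))]
  exact (hu.fderiv_right le_rfl).clm_apply contDiff_const

lemma contDiff_spaceDeriv {n : ℕ} (hu : ContDiff ℝ (n + 1) (uncurry u)) :
    ContDiff ℝ n (uncurry (spaceDeriv u)) := by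
  rw [uncurry_spaceDeriv (hu.differentiable (by simp))]
  exact (hu.fderiv_right le_rfl).clm_apply contDiff_const

lemma timeDeriv_spaceDeriv_comm (hu : ContDiff ℝ 2 (uncurry u)) :
    timeDeriv (spaceDeriv u) = spaceDeriv (timeDeriv u) := by
  have hd : Differentiable ℝ (uncurry u) := hu.differentiable two_ne_zero
  have hd' : Differentiable ℝ (fderiv ℝ (uncurry u)) :=
    (hu.fderiv_right (m := 1) (by norm_num)).differentiable one_ne_zero
  have fderiv_apply (v w p : ℝ × ℝ) : fderiv ℝ (fun q => fderiv ℝ (uncurry u) q v) p w =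
      fderiv ℝ (fderiv ℝ (uncurry u)) p w v := by
    simp [fderiv_clm_apply (hd' p) (differentiableAt_const v)]
  apply uncurry_injective
  rw [uncurry_timeDeriv ((contDiff_spaceDeriv (n := 1) hu).differentiable one_ne_zero),
    uncurry_spaceDeriv ((contDiff_timeDeriv (n := 1) hu).differentiable one_ne_zero),
    uncurry_timeDeriv hd, uncurry_spaceDeriv hd]
  ext p
  rw [fderiv_apply, fderiv_apply]
  exact hu.contDiffAt.isSymmSndFDerivAt (by simp) _ _

lemma contDiff_succ_of_hasDerivAt {n : ℕ} {a b : ℝ → ℝ → E}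
    (hut : ∀ t x, HasDerivAt (fun τ => u τ x) (a t x) t)
    (hux : ∀ t x, HasDerivAt (u t) (b t x) x)
    (ha : ContDiff ℝ n (uncurry a)) (hb : ContDiff ℝ n (uncurry b)) :
    ContDiff ℝ (n + 1) (uncurry u) := by
  let L := ContinuousLinearMap.toSpanSingletonCLE (𝕜 := ℝ) (E := E)
  have ha' : ContDiff ℝ n fun p : ℝ × ℝ => L (a p.1 p.2) := L.contDiff.comp ha
  have hb' : ContDiff ℝ n fun p : ℝ × ℝ => L (b p.1 p.2) := L.contDiff.comp hb
  refine contDiff_succ_iff_hasFDerivAt.2 ⟨fun p => (L (a p.1 p.2)).coprod (L (b p.1 p.2)),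
    (ContinuousLinearMap.coprodEquivL (𝕜 := ℝ) (E := ℝ) (F := ℝ) (G := E) ℝ).contDiff.comp
      (ha'.prodMk hb'), fun p => ?_⟩
  exact (hasStrictFDerivAt_uncurry_coprod (f₁ := fun t x => L (a t x)) (f₂ := fun t x => L (b t x))
    (.of_forall fun q => (hut q.1 q.2).hasFDerivAt) (.of_forall fun q => (hux q.1 q.2).hasFDerivAt)
    ha'.continuous.continuousAt hb'.continuous.continuousAt).hasFDerivAt

end PartialDerivatives

section TimePrimitive

variable {E : Type*} [NormedAddCommGroup E] [NormedSpace ℝ E] {u : ℝ → ℝ → E}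

lemma hasDerivAt_intervalIntegral_of_continuous {f f' : ℝ → ℝ → E}
    (hf : ∀ t x, HasDerivAt (fun τ => f τ x) (f' t x) t)
    (hc : Continuous (uncurry f)) (hc' : Continuous (uncurry f')) (a b t : ℝ) :
    HasDerivAt (fun τ => ∫ x in a..b, f τ x) (∫ x in a..b, f' t x) t := by
  obtain ⟨C, hC⟩ := ((isCompact_closedBall t 1).prod
    (isCompact_uIcc (a := a) (b := b))).exists_bound_of_continuousOn hc'.continuousOn
  exact (intervalIntegral.hasDerivAt_integral_of_dominated_loc_of_deriv_le (bound := fun _ => C)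
    (Metric.closedBall_mem_nhds t one_pos)
    (.of_forall fun s => (hc.uncurry_left s).aestronglyMeasurable)
    ((hc.uncurry_left t).intervalIntegrable _ _) (hc'.uncurry_left t).aestronglyMeasurable
    (.of_forall fun x hx s hs => hC (s, x) ⟨hs, uIoc_subset_uIcc hx⟩) (by simp)
    (.of_forall fun x _ s _ => hf s x)).2

/-- The primitive `∫₀ᵗ u(τ, x) dτ` in the time variable, vanishing at time `0`. -/
noncomputable def timePrimitive (u : ℝ → ℝ → E) (t x : ℝ) : E := ∫ τ in (0 : ℝ)..t, u τ x

lemma continuous_timePrimitive (hu : Continuous (uncurry u)) :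
    Continuous (uncurry (timePrimitive u)) :=
  intervalIntegral.continuous_parametric_intervalIntegral_of_continuous
    (f := fun (p : ℝ × ℝ) τ => u τ p.2)
    (hu.comp (by fun_prop : Continuous fun q : (ℝ × ℝ) × ℝ => (q.2, q.1.2))) continuous_fst

lemma hasDerivAt_timePrimitive_space (hu : ContDiff ℝ 1 (uncurry u)) (t x : ℝ) :
    HasDerivAt (timePrimitive u t) (timePrimitive (spaceDeriv u) t x) x :=
  hasDerivAt_intervalIntegral_of_continuous (f := fun y τ => u τ y)
    (fun y τ => hasDerivAt_spaceDeriv (hu.differentiable one_ne_zero) τ y)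
    (hu.continuous.comp continuous_swap)
    ((contDiff_spaceDeriv (n := 0) hu).continuous.comp continuous_swap) 0 t x

lemma spaceDeriv_timePrimitive (hu : ContDiff ℝ 1 (uncurry u)) :
    spaceDeriv (timePrimitive u) = timePrimitive (spaceDeriv u) := by
  ext t x
  exact (hasDerivAt_timePrimitive_space hu t x).deriv

variable [CompleteSpace E]

lemma hasDerivAt_timePrimitive_time (hu : Continuous (uncurry u)) (t x : ℝ) :
    HasDerivAt (fun τ => timePrimitive u τ x) (u t x) t :=
  (hu.uncurry_right x).integral_hasStrictDerivAt 0 t |>.hasDerivAt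

lemma timeDeriv_timePrimitive (hu : Continuous (uncurry u)) :
    timeDeriv (timePrimitive u) = u := by
  ext t x
  exact (hasDerivAt_timePrimitive_time hu t x).deriv

lemma timePrimitive_timeDeriv (hu : ContDiff ℝ 1 (uncurry u)) (t x : ℝ) :
    timePrimitive (timeDeriv u) t x = u t x - u 0 x :=
  intervalIntegral.integral_eq_sub_of_hasDerivAt
    (fun τ _ => hasDerivAt_timeDeriv (hu.differentiable one_ne_zero) τ x)
    (((contDiff_timeDeriv (n := 0) hu).continuous.uncurry_right x).intervalIntegrable _ _)

lemma contDiff_timePrimitive {n : ℕ} (hu : ContDiff ℝ n (uncurry u)) :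
    ContDiff ℝ n (uncurry (timePrimitive u)) := by
  induction n generalizing u with
  | zero => exact contDiff_zero.2 (continuous_timePrimitive hu.continuous)
  | succ n ih =>
    exact contDiff_succ_of_hasDerivAt (hasDerivAt_timePrimitive_time hu.continuous)
      (hasDerivAt_timePrimitive_space (hu.of_le (by simp)))
      (hu.of_le (by simp)) (ih (contDiff_spaceDeriv hu))

end TimePrimitive

section SupportedInCone

variable {E : Type*} [NormedAddCommGroup E] {u : ℝ → ℝ → E} {R : ℝ}

/-- `u t x` vanishes outside the cone `|x| ≤ R + |t|`, as do waves of speed one whose data at time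
`0` are supported in `[-R, R]`. The vanishing is required on an open set only, so that it passes to
derivatives without continuity assumptions. -/
def SupportedInCone (R : ℝ) (u : ℝ → ℝ → E) : Prop :=
  ∀ t x, R + |t| < |x| → u t x = 0

namespace SupportedInCone

lemma hasCompactSupport (hu : SupportedInCone R u) (t : ℝ) : HasCompactSupport (u t) :=
  .intro (isCompact_closedBall 0 (R + |t|)) fun x hx => hu t x (by simpa using hx)

lemma integrable (hu : SupportedInCone R u) (hc : Continuous (uncurry u)) (t : ℝ) :
    Integrable (u t) :=
  (hc.uncurry_left t).integrable_of_hasCompactSupport (hu.hasCompactSupport t)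

variable [NormedSpace ℝ E]

protected lemma timeDeriv (hu : SupportedInCone R u) : SupportedInCone R (timeDeriv u) := by
  intro t x htx
  have near_t : ∀ᶠ τ in nhds t, R + |τ| < |x| :=
    ContinuousAt.eventually_lt (by fun_prop) continuousAt_const htx
  have zero_near_t : (fun τ => u τ x) =ᶠ[nhds t] fun _ => 0 := near_t.mono fun τ => hu τ x
  exact zero_near_t.deriv_eq.trans (deriv_const t 0)

protected lemma spaceDeriv (hu : SupportedInCone R u) : SupportedInCone R (spaceDeriv u) := by
  intro t x htx
  have near_x : ∀ᶠ y in nhds x, R + |t| < |y| :=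
    continuousAt_const.eventually_lt (by fun_prop) htx
  have zero_near_x : u t =ᶠ[nhds x] fun _ => 0 := near_x.mono fun y => hu t y
  exact zero_near_x.deriv_eq.trans (deriv_const x 0)

protected lemma timePrimitive (hu : SupportedInCone R u) : SupportedInCone R (timePrimitive u) := by
  intro t x htx
  refine intervalIntegral.integral_zero_ae (.of_forall fun τ hτ => hu τ x ?_)
  have : |τ| ≤ |t| := by simpa using abs_sub_left_of_mem_uIcc (uIoc_subset_uIcc hτ)
  linarith

lemma integral_eq_intervalIntegral (hu : SupportedInCone R u) {t L : ℝ} (hL : R + |t| < L) :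
    ∫ x, u t x = ∫ x in (-L)..L, u t x := by
  refine (intervalIntegral.integral_eq_integral_of_support_subset fun x hx => ?_).symm
  have : |x| < L := (not_lt.1 (mt (hu t x) hx)).trans_lt hL
  exact Ioo_subset_Ioc_self (abs_lt.1 this)

lemma hasDerivAt_integral (hu : SupportedInCone R u) {u' : ℝ → ℝ → E}
    (hu' : ∀ t x, HasDerivAt (fun τ => u τ x) (u' t x) t)
    (hc : Continuous (uncurry u)) (hc' : Continuous (uncurry u')) (t : ℝ) :
    HasDerivAt (fun τ => ∫ x, u τ x) (∫ x, u' t x) t := by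
  have hu'_supp : SupportedInCone R u' := fun t x htx =>
    (hu' t x).deriv.symm.trans (hu.timeDeriv t x htx)
  have near_t : ∀ᶠ τ in nhds t, R + |τ| < R + |t| + 1 :=
    ContinuousAt.eventually_lt (by fun_prop) continuousAt_const (lt_add_one _)
  rw [hu'_supp.integral_eq_intervalIntegral (lt_add_one _)]
  exact (hasDerivAt_intervalIntegral_of_continuous hu' hc hc' _ _ t).congr_of_eventuallyEq
    (near_t.mono fun τ => hu.integral_eq_intervalIntegral)

end SupportedInCone

end SupportedInCone

section IntegralInequalities

lemma hasCompactSupport_sq {f : ℝ → ℝ} (hf : HasCompactSupport f) :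
    HasCompactSupport fun x => f x ^ 2 :=
  hf.comp_left (g := (· ^ 2)) (zero_pow two_ne_zero)

lemma sq_le_integral_sq_add_deriv_sq {f : ℝ → ℝ} (hf : ContDiff ℝ 1 f) (hsupp : HasCompactSupport f)
    (x : ℝ) : f x ^ 2 ≤ ∫ y, (f y ^ 2 + deriv f y ^ 2) := by
  have hf' : Continuous (deriv f) := hf.continuous_deriv le_rfl
  have hsupp_sq : HasCompactSupport fun y => f y ^ 2 := hasCompactSupport_sq hsupp
  have integrable_deriv_sq : Integrable (deriv fun y => f y ^ 2) :=
    ((hf.pow 2).continuous_deriv le_rfl).integrable_of_hasCompactSupport hsupp_sq.deriv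
  have integrable_sum : Integrable fun y => f y ^ 2 + deriv f y ^ 2 :=
    ((hf.continuous.pow 2).add (hf'.pow 2)).integrable_of_hasCompactSupport
      (hsupp_sq.add (hasCompactSupport_sq hsupp.deriv))
  have deriv_sq_le (y : ℝ) : deriv (fun y => f y ^ 2) y ≤ f y ^ 2 + deriv f y ^ 2 := by
    simpa [deriv_fun_pow (hf.differentiable one_ne_zero y)] using
      two_mul_le_add_sq (f y) (deriv f y)
  calc f x ^ 2 = ∫ y in Iic x, deriv (fun y => f y ^ 2) y :=
        (hsupp_sq.integral_Iic_deriv_eq (hf.pow 2) x).symm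
    _ ≤ ∫ y in Iic x, (f y ^ 2 + deriv f y ^ 2) :=
        setIntegral_mono integrable_deriv_sq.integrableOn integrable_sum.integrableOn deriv_sq_le
    _ ≤ ∫ y, (f y ^ 2 + deriv f y ^ 2) :=
        setIntegral_le_integral integrable_sum (.of_forall fun y => by positivity)

lemma sq_intervalIntegral_le {g : ℝ → ℝ} (hg : Continuous g) {a b : ℝ} (hab : a ≤ b) :
    (∫ x in a..b, g x) ^ 2 ≤ (b - a) * ∫ x in a..b, g x ^ 2 := by
  obtain rfl | hab' := hab.eq_or_lt
  · simp
  set I := ∫ x in a..b, g x with hI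
  have variance_eq : ∫ x in a..b, ((b - a) * g x - I) ^ 2 =
      (b - a) * ((b - a) * (∫ x in a..b, g x ^ 2) - I ^ 2) := by
    have expand (x : ℝ) : ((b - a) * g x - I) ^ 2 =
        (b - a) ^ 2 * g x ^ 2 - 2 * (b - a) * I * g x + I ^ 2 := by ring
    simp only [expand]
    rw [intervalIntegral.integral_add (Continuous.intervalIntegrable (by fun_prop) _ _)
        (Continuous.intervalIntegrable (by fun_prop) _ _),
      intervalIntegral.integral_sub (Continuous.intervalIntegrable (by fun_prop) _ _)
        (Continuous.intervalIntegrable (by fun_prop) _ _),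
      intervalIntegral.integral_const_mul, intervalIntegral.integral_const_mul,
      intervalIntegral.integral_const, ← hI, smul_eq_mul]
    ring
  have variance_nonneg : 0 ≤ ∫ x in a..b, ((b - a) * g x - I) ^ 2 :=
    intervalIntegral.integral_nonneg hab fun x _ => sq_nonneg _
  rw [variance_eq] at variance_nonneg
  exact sub_nonneg.1 (nonneg_of_mul_nonneg_right variance_nonneg (sub_pos.2 hab'))

lemma sq_sub_le_mul_integral_deriv_sq {f : ℝ → ℝ} (hf : ContDiff ℝ 1 f) {a b x y : ℝ}
    (hx : x ∈ Icc a b) (hy : y ∈ Icc a b) :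
    (f x - f y) ^ 2 ≤ (b - a) * ∫ z in a..b, deriv f z ^ 2 := by
  wlog hyx : y ≤ x generalizing x y
  · rw [← neg_sub, neg_sq]
    exact this hy hx (le_of_not_ge hyx)
  have hf' : Continuous (deriv f) := hf.continuous_deriv le_rfl
  rw [← intervalIntegral.integral_deriv_eq_sub (fun z _ => hf.differentiable one_ne_zero z)
    (hf'.intervalIntegrable _ _)]
  refine (sq_intervalIntegral_le hf' hyx).trans ?_
  gcongr
  · exact intervalIntegral.integral_nonneg hyx fun z _ => sq_nonneg _
  · exact sub_nonneg.2 (hx.1.trans hx.2)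
  · exact hx.2
  · exact hy.1
  · exact intervalIntegral.integral_mono_interval hy.1 hyx hx.2
      (.of_forall fun z => sq_nonneg _) ((hf'.pow 2).intervalIntegrable _ _)

lemma two_mul_intervalIntegral_mul_le {f g : ℝ → ℝ} (hf : Continuous f) (hg : Continuous g)
    {a b c Q : ℝ} (hab : a < b) (hc : 0 < c) (hfQ : ∀ x ∈ Icc a b, f x ^ 2 ≤ c * Q) :
    2 * ∫ x in a..b, g x * f x ≤ (b - a) * c * (∫ x in a..b, g x ^ 2) + Q := by
  set d := b - a
  have hd : 0 < d := sub_pos.2 hab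
  have two_mul_le (x : ℝ) (hx : x ∈ Icc a b) : 2 * (g x * f x) ≤ d * c * g x ^ 2 + Q / d := by
    suffices d * c * (2 * (g x * f x)) ≤ d * c * (d * c * g x ^ 2 + Q / d) from
      le_of_mul_le_mul_left this (by positivity)
    calc d * c * (2 * (g x * f x)) = 2 * (d * c * g x) * f x := by ring
      _ ≤ (d * c * g x) ^ 2 + f x ^ 2 := two_mul_le_add_sq _ _
      _ ≤ (d * c * g x) ^ 2 + c * Q := by gcongr; exact hfQ x hx
      _ = d * c * (d * c * g x ^ 2 + Q / d) := by field_simp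
  calc 2 * ∫ x in a..b, g x * f x = ∫ x in a..b, 2 * (g x * f x) :=
        (intervalIntegral.integral_const_mul _ _).symm
    _ ≤ ∫ x in a..b, (d * c * g x ^ 2 + Q / d) :=
        intervalIntegral.integral_mono_on hab.le
          (Continuous.intervalIntegrable (by fun_prop) _ _)
          (Continuous.intervalIntegrable (by fun_prop) _ _) two_mul_le
    _ = d * c * (∫ x in a..b, g x ^ 2) + Q := by
        rw [intervalIntegral.integral_add (Continuous.intervalIntegrable (by fun_prop) _ _)
          (by simp), intervalIntegral.integral_const_mul, intervalIntegral.integral_const,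
          smul_eq_mul, mul_div_cancel₀ Q hd.ne']

variable {W : ℝ → ℝ}

lemma integral_mul_sq_le (hWc : Continuous W) (hW : 0 ≤ W) {f : ℝ → ℝ} (hf : ContDiff ℝ 1 f)
    {a b x : ℝ} (hx : x ∈ Icc a b) :
    (∫ y in a..b, W y) * f x ^ 2 ≤ 2 * (∫ y in a..b, W y * f y ^ 2) +
      2 * (b - a) * (∫ y in a..b, W y) * ∫ y in a..b, deriv f y ^ 2 := by
  set D := ∫ y in a..b, deriv f y ^ 2
  have hfc : Continuous f := hf.continuous
  have sq_le (y : ℝ) (hy : y ∈ Icc a b) : f x ^ 2 ≤ 2 * f y ^ 2 + 2 * (b - a) * D := by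
    linarith [sq_sub_le_mul_integral_deriv_sq hf hx hy, sq_nonneg (f x - 2 * f y)]
  have weighted_sq_le (y : ℝ) (hy : y ∈ Icc a b) :
      W y * f x ^ 2 ≤ 2 * (W y * f y ^ 2) + W y * (2 * (b - a) * D) := by
    calc W y * f x ^ 2 ≤ W y * (2 * f y ^ 2 + 2 * (b - a) * D) :=
          mul_le_mul_of_nonneg_left (sq_le y hy) (hW y)
      _ = _ := by ring
  calc (∫ y in a..b, W y) * f x ^ 2 = ∫ y in a..b, W y * f x ^ 2 :=
        (intervalIntegral.integral_mul_const _ _).symm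
    _ ≤ ∫ y in a..b, (2 * (W y * f y ^ 2) + W y * (2 * (b - a) * D)) :=
        intervalIntegral.integral_mono_on (hx.1.trans hx.2)
          (Continuous.intervalIntegrable (by fun_prop) _ _)
          (Continuous.intervalIntegrable (by fun_prop) _ _) weighted_sq_le
    _ = 2 * (∫ y in a..b, W y * f y ^ 2) + (∫ y in a..b, W y) * (2 * (b - a) * D) := by
        rw [intervalIntegral.integral_add (Continuous.intervalIntegrable (by fun_prop) _ _)
            (Continuous.intervalIntegrable (by fun_prop) _ _),
          intervalIntegral.integral_mul_const, intervalIntegral.integral_const_mul]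
    _ = _ := by ring

lemma exists_sq_le_mul_integral (hWc : Continuous W) (hW : 0 ≤ W) {a b : ℝ}
    (hab : a ≤ b) (hWab : 0 < ∫ x in a..b, W x) :
    ∃ c > 0, ∀ f : ℝ → ℝ, ContDiff ℝ 1 f → ∀ x ∈ Icc a b,
      f x ^ 2 ≤ c * ∫ y in a..b, (deriv f y ^ 2 + W y * f y ^ 2) := by
  set M := ∫ x in a..b, W x
  have hba : 0 ≤ b - a := sub_nonneg.2 hab
  refine ⟨2 / M + 2 * (b - a), by positivity, fun f hf x hx => ?_⟩
  have hf' : Continuous (deriv f) := hf.continuous_deriv le_rfl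
  set D := ∫ y in a..b, deriv f y ^ 2
  set P := ∫ y in a..b, W y * f y ^ 2
  have hD : 0 ≤ D := intervalIntegral.integral_nonneg hab fun y _ => sq_nonneg _
  have hP : 0 ≤ P := intervalIntegral.integral_nonneg hab fun y _ => mul_nonneg (hW y) (sq_nonneg _)
  have integral_eq : ∫ y in a..b, (deriv f y ^ 2 + W y * f y ^ 2) = D + P :=
    intervalIntegral.integral_add ((hf'.pow 2).intervalIntegrable _ _)
      ((hWc.mul (hf.continuous.pow 2)).intervalIntegrable _ _)
  rw [integral_eq]
  calc f x ^ 2 ≤ (2 * P + 2 * (b - a) * M * D) / M := by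
        rw [le_div_iff₀' hWab]
        exact integral_mul_sq_le hWc hW hf hx
    _ = 2 / M * P + 2 * (b - a) * D := by field_simp
    _ ≤ (2 / M + 2 * (b - a)) * (D + P) := by
      nlinarith [mul_nonneg (div_pos two_pos hWab).le hD, mul_nonneg hba hP]

lemma exists_Ioo_superset_integral_pos (hWc : Continuous W) (hW : 0 ≤ W) (hW' : W ≠ 0) {s : Set ℝ}
    (hs : Bornology.IsBounded s) : ∃ L > 0, s ⊆ Ioo (-L) L ∧ 0 < ∫ x in (-L)..L, W x := by
  obtain ⟨x₀, hx₀⟩ := Function.ne_iff.1 hW'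
  obtain ⟨L, hx₀L, hsL⟩ := hs.subset_ball_lt |x₀| 0
  have hL : 0 < L := (abs_nonneg x₀).trans_lt hx₀L
  refine ⟨L, hL, by simpa [Real.ball_eq_Ioo] using hsL, ?_⟩
  exact intervalIntegral.integral_pos (by linarith) hWc.continuousOn (fun x _ => hW x)
    ⟨x₀, abs_le.1 hx₀L.le, (hW x₀).lt_of_ne' hx₀⟩

/-- `W` need only be positive somewhere: it controls `f` at one place, and `∫ f'²` carries the
control to the support of `g`. -/
lemma exists_two_mul_integral_mul_le (hWc : Continuous W) (hW : 0 ≤ W) (hW' : W ≠ 0) {g : ℝ → ℝ}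
    (hg : Continuous g) (hgsupp : HasCompactSupport g) :
    ∃ K, ∀ f : ℝ → ℝ, ContDiff ℝ 1 f → HasCompactSupport f →
      2 * ∫ x, g x * f x ≤ K + ∫ x, (deriv f x ^ 2 + W x * f x ^ 2) := by
  obtain ⟨L, hL, hgL, hW_pos⟩ :=
    exists_Ioo_superset_integral_pos hWc hW hW' hgsupp.isCompact.isBounded
  have neg_L_lt : -L < L := by linarith
  obtain ⟨c, hc, sq_le⟩ := exists_sq_le_mul_integral hWc hW neg_L_lt.le hW_pos
  refine ⟨(L - -L) * c * ∫ x in (-L)..L, g x ^ 2, fun f hf hfsupp => ?_⟩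
  have hf' : Continuous (deriv f) := hf.continuous_deriv le_rfl
  set q := fun x => deriv f x ^ 2 + W x * f x ^ 2
  have q_nonneg (x : ℝ) : 0 ≤ q x := add_nonneg (sq_nonneg _) (mul_nonneg (hW x) (sq_nonneg _))
  have q_integrable : Integrable q :=
    ((hf'.pow 2).add (hWc.mul (hf.continuous.pow 2))).integrable_of_hasCompactSupport
      ((hasCompactSupport_sq hfsupp.deriv).add (hasCompactSupport_sq hfsupp).mul_left)
  calc 2 * ∫ x, g x * f x = 2 * ∫ x in (-L)..L, g x * f x := by
        rw [intervalIntegral.integral_eq_integral_of_support_subset]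
        exact (support_mul_subset_left g f).trans
          ((subset_tsupport g).trans (hgL.trans Ioo_subset_Ioc_self))
    _ ≤ (L - -L) * c * (∫ x in (-L)..L, g x ^ 2) + ∫ x in (-L)..L, q x :=
        two_mul_intervalIntegral_mul_le hf.continuous hg neg_L_lt hc (sq_le f hf)
    _ ≤ (L - -L) * c * (∫ x in (-L)..L, g x ^ 2) + ∫ x, q x := by
        gcongr
        exact (intervalIntegral.integral_of_le neg_L_lt.le).trans_le
          (setIntegral_le_integral q_integrable (.of_forall q_nonneg))

end IntegralInequalities

section Waves

variable {W g : ℝ → ℝ} {R : ℝ} {u : ℝ → ℝ → ℝ}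

/-- `u` is a classical solution, supported in the cone `|x| ≤ R + |t|`, of the wave equation
`uₜₜ = uₓₓ - W u + g` with potential `W` and source `g`, both independent of time. -/
structure IsWave (W g : ℝ → ℝ) (R : ℝ) (u : ℝ → ℝ → ℝ) : Prop where
  contDiff : ContDiff ℝ 2 (uncurry u)
  timeDeriv_timeDeriv : ∀ t x,
    timeDeriv (timeDeriv u) t x = spaceDeriv (spaceDeriv u) t x - W x * u t x + g x
  supportedInCone : SupportedInCone R u

/-- Twice the energy density of `u`; the source `g` contributes the potential energy `-g u`. -/
noncomputable def waveEnergyDensity (W g : ℝ → ℝ) (u : ℝ → ℝ → ℝ) (t x : ℝ) : ℝ :=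
  timeDeriv u t x ^ 2 + (spaceDeriv u t x ^ 2 + W x * u t x ^ 2) - 2 * (g x * u t x)

/-- Twice the energy of `u` at time `t`, conserved along waves with potential `W` and source `g`. -/
noncomputable def waveEnergy (W g : ℝ → ℝ) (u : ℝ → ℝ → ℝ) (t : ℝ) : ℝ :=
  ∫ x, waveEnergyDensity W g u t x

namespace IsWave

protected lemma contDiff_timeDeriv (hu : IsWave W g R u) : ContDiff ℝ 1 (uncurry (timeDeriv u)) :=
  contDiff_timeDeriv (n := 1) hu.contDiff

protected lemma contDiff_spaceDeriv (hu : IsWave W g R u) : ContDiff ℝ 1 (uncurry (spaceDeriv u)) :=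
  contDiff_spaceDeriv (n := 1) hu.contDiff

lemma supportedInCone_waveEnergyDensity (hu : IsWave W g R u) :
    SupportedInCone R (waveEnergyDensity W g u) := by
  intro t x htx
  simp [waveEnergyDensity, hu.supportedInCone t x htx, hu.supportedInCone.timeDeriv t x htx,
    hu.supportedInCone.spaceDeriv t x htx]

lemma continuous_waveEnergyDensity (hu : IsWave W g R u) (hW : Continuous W) (hg : Continuous g) :
    Continuous (uncurry (waveEnergyDensity W g u)) := by
  have h := hu.contDiff.continuous
  have ht := hu.contDiff_timeDeriv.continuous
  have hx := hu.contDiff_spaceDeriv.continuous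
  simp only [uncurry_def] at h ht hx
  simp only [uncurry_def, waveEnergyDensity]
  fun_prop

lemma hasDerivAt_waveEnergyDensity (hu : IsWave W g R u) (t x : ℝ) :
    HasDerivAt (fun τ => waveEnergyDensity W g u τ x)
      (spaceDeriv (fun t x => 2 * (timeDeriv u t x * spaceDeriv u t x)) t x) t := by
  have hu_t := hu.contDiff_timeDeriv.differentiable one_ne_zero
  have hu_x := hu.contDiff_spaceDeriv.differentiable one_ne_zero
  have flux := ((hasDerivAt_spaceDeriv hu_t t x).mul (hasDerivAt_spaceDeriv hu_x t x)).const_mul 2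
  have du := hasDerivAt_timeDeriv (hu.contDiff.differentiable two_ne_zero) t x
  have du_t := hasDerivAt_timeDeriv hu_t t x
  have du_x := hasDerivAt_timeDeriv hu_x t x
  refine (((du_t.pow 2).add ((du_x.pow 2).add ((du.pow 2).const_mul (W x)))).sub
    ((du.const_mul (g x)).const_mul 2)).congr_deriv (.trans ?_ flux.deriv.symm)
  rw [hu.timeDeriv_timeDeriv, timeDeriv_spaceDeriv_comm hu.contDiff]
  ring

lemma waveEnergy_eq (hu : IsWave W g R u) (hW : Continuous W) (hg : Continuous g) (t : ℝ) :
    waveEnergy W g u t = waveEnergy W g u 0 := by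
  set flux : ℝ → ℝ → ℝ := fun t x => 2 * (timeDeriv u t x * spaceDeriv u t x)
  have flux_supp : SupportedInCone R flux := fun t x htx => by
    simp [flux, hu.supportedInCone.timeDeriv t x htx]
  have flux_contDiff : ContDiff ℝ 1 (uncurry flux) :=
    contDiff_const.mul (hu.contDiff_timeDeriv.mul hu.contDiff_spaceDeriv)
  have flux_x_continuous : Continuous (uncurry (spaceDeriv flux)) :=
    (contDiff_spaceDeriv (n := 0) flux_contDiff).continuous
  have integral_flux_x (t : ℝ) : ∫ x, spaceDeriv flux t x = 0 :=
    integral_eq_zero_of_hasDerivAt_of_integrable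
      (hasDerivAt_spaceDeriv (flux_contDiff.differentiable one_ne_zero) t)
      (flux_supp.spaceDeriv.integrable flux_x_continuous t)
      (flux_supp.integrable flux_contDiff.continuous t)
  have hasDerivAt_energy (t : ℝ) : HasDerivAt (waveEnergy W g u) 0 t :=
    integral_flux_x t ▸ hu.supportedInCone_waveEnergyDensity.hasDerivAt_integral
      hu.hasDerivAt_waveEnergyDensity (hu.continuous_waveEnergyDensity hW hg) flux_x_continuous t
  exact is_const_of_deriv_eq_zero (fun t => (hasDerivAt_energy t).differentiableAt)
    (fun t => (hasDerivAt_energy t).deriv) t 0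

lemma integrable_sq (hu : IsWave W g R u) (t : ℝ) : Integrable fun x => u t x ^ 2 :=
  ((hu.contDiff.continuous.uncurry_left t).pow 2).integrable_of_hasCompactSupport
    (hasCompactSupport_sq (hu.supportedInCone.hasCompactSupport t))

lemma integrable_timeDeriv_sq (hu : IsWave W g R u) (t : ℝ) :
    Integrable fun x => timeDeriv u t x ^ 2 :=
  ((hu.contDiff_timeDeriv.continuous.uncurry_left t).pow 2).integrable_of_hasCompactSupport
    (hasCompactSupport_sq (hu.supportedInCone.timeDeriv.hasCompactSupport t))

lemma integrable_spaceDeriv_sq (hu : IsWave W g R u) (t : ℝ) :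
    Integrable fun x => spaceDeriv u t x ^ 2 :=
  ((hu.contDiff_spaceDeriv.continuous.uncurry_left t).pow 2).integrable_of_hasCompactSupport
    (hasCompactSupport_sq (hu.supportedInCone.spaceDeriv.hasCompactSupport t))

lemma integrable_spaceDeriv_sq_add (hu : IsWave W g R u) (hW : Continuous W) (t : ℝ) :
    Integrable fun x => spaceDeriv u t x ^ 2 + W x * u t x ^ 2 :=
  (hu.integrable_spaceDeriv_sq t).add <|
    (hW.mul ((hu.contDiff.continuous.uncurry_left t).pow 2)).integrable_of_hasCompactSupport
      (hasCompactSupport_sq (hu.supportedInCone.hasCompactSupport t)).mul_left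

lemma integrable_source_mul (hu : IsWave W g R u) (hg : Continuous g) (t : ℝ) :
    Integrable fun x => g x * u t x :=
  (hg.mul (hu.contDiff.continuous.uncurry_left t)).integrable_of_hasCompactSupport
    (hu.supportedInCone.hasCompactSupport t).mul_left

lemma waveEnergy_eq_integral_add (hu : IsWave W g R u) (hW : Continuous W) (hg : Continuous g)
    (t : ℝ) : waveEnergy W g u t = (∫ x, timeDeriv u t x ^ 2) +
      (∫ x, (spaceDeriv u t x ^ 2 + W x * u t x ^ 2)) - 2 * ∫ x, g x * u t x := by
  have kinetic_integrable := hu.integrable_timeDeriv_sq t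
  have potential_integrable := hu.integrable_spaceDeriv_sq_add hW t
  rw [← integral_const_mul, ← integral_add kinetic_integrable potential_integrable]
  exact integral_sub (kinetic_integrable.add potential_integrable)
    ((hu.integrable_source_mul hg t).const_mul 2)

lemma integral_spaceDeriv_sq_le (hu : IsWave W 0 R u) (hWc : Continuous W) (hW : 0 ≤ W) (t : ℝ) :
    ∫ x, spaceDeriv u t x ^ 2 ≤ waveEnergy W 0 u 0 := by
  have energy_eq := hu.waveEnergy_eq_integral_add hWc continuous_zero t
  have timeDeriv_nonneg : 0 ≤ ∫ x, timeDeriv u t x ^ 2 := integral_nonneg fun x => sq_nonneg _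
  calc ∫ x, spaceDeriv u t x ^ 2 ≤ ∫ x, (spaceDeriv u t x ^ 2 + W x * u t x ^ 2) :=
        integral_mono (hu.integrable_spaceDeriv_sq t)
          (hu.integrable_spaceDeriv_sq_add hWc t) fun x =>
            le_add_of_nonneg_right (mul_nonneg (hW x) (sq_nonneg _))
    _ ≤ waveEnergy W 0 u t := by simpa [energy_eq] using timeDeriv_nonneg
    _ = waveEnergy W 0 u 0 := hu.waveEnergy_eq hWc continuous_zero t

lemma exists_integral_timeDeriv_sq_le (hu : IsWave W g R u) (hWc : Continuous W) (hW : 0 ≤ W)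
    (hW' : W ≠ 0) (hg : Continuous g) (hgsupp : HasCompactSupport g) :
    ∃ K, ∀ t, ∫ x, timeDeriv u t x ^ 2 ≤ K := by
  obtain ⟨K, source_le⟩ := exists_two_mul_integral_mul_le hWc hW hW' hg hgsupp
  refine ⟨waveEnergy W g u 0 + K, fun t => ?_⟩
  have energy_eq := hu.waveEnergy_eq_integral_add hWc hg t
  rw [hu.waveEnergy_eq hWc hg] at energy_eq
  have hut : ContDiff ℝ 1 (u t) :=
    (hu.contDiff.comp (contDiff_prodMk_right t)).of_le one_le_two
  have := source_le (u t) hut (hu.supportedInCone.hasCompactSupport t)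
  simp only [spaceDeriv] at energy_eq
  linarith

/-- The equation can be integrated in time because `W` does not depend on time; the initial velocity
turns into a source. -/
protected lemma timePrimitive (hu : IsWave W 0 R u) :
    IsWave W (timeDeriv u 0) R (timePrimitive u) where
  contDiff := contDiff_timePrimitive (n := 2) hu.contDiff
  timeDeriv_timeDeriv t x := by
    have hu_xx : Continuous (uncurry (spaceDeriv (spaceDeriv u))) :=
      (contDiff_spaceDeriv (n := 0) hu.contDiff_spaceDeriv).continuous
    have integrated_eq := calc timeDeriv u t x - timeDeriv u 0 x
        _ = ∫ τ in (0 : ℝ)..t, timeDeriv (timeDeriv u) τ x :=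
          (timePrimitive_timeDeriv hu.contDiff_timeDeriv t x).symm
        _ = ∫ τ in (0 : ℝ)..t, (spaceDeriv (spaceDeriv u) τ x - W x * u τ x) := by
          simp [hu.timeDeriv_timeDeriv]
        _ = _ := intervalIntegral.integral_sub
          ((hu_xx.uncurry_right x).intervalIntegrable _ _)
          ((continuous_const.mul (hu.contDiff.continuous.uncurry_right x)).intervalIntegrable _ _)
    rw [intervalIntegral.integral_const_mul] at integrated_eq
    rw [timeDeriv_timePrimitive hu.contDiff.continuous,
      spaceDeriv_timePrimitive (hu.contDiff.of_le one_le_two),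
      spaceDeriv_timePrimitive hu.contDiff_spaceDeriv]
    exact sub_eq_iff_eq_add.1 integrated_eq
  supportedInCone := hu.supportedInCone.timePrimitive

lemma exists_integral_sq_le (hu : IsWave W 0 R u) (hWc : Continuous W) (hW : 0 ≤ W) (hW' : W ≠ 0) :
    ∃ K, ∀ t, ∫ x, u t x ^ 2 ≤ K := by
  simpa only [timeDeriv_timePrimitive hu.contDiff.continuous] using
    hu.timePrimitive.exists_integral_timeDeriv_sq_le hWc hW hW'
      (hu.contDiff_timeDeriv.continuous.uncurry_left 0)
      (hu.supportedInCone.timeDeriv.hasCompactSupport 0)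

end IsWave

end Waves

theorem mode_uniform_bound_general {W : ℝ → ℝ} (hWc : Continuous W) (hW : 0 ≤ W) (hW' : W ≠ 0)
    {F : ℝ → ℝ → ℝ} (hF : ContDiff ℝ 2 (uncurry F))
    (heq : ∀ t x : ℝ, deriv (deriv (fun τ => F τ x)) t = deriv (deriv (F t)) x - W x * F t x)
    {R : ℝ} (hsupp : ∀ t x : ℝ, R + |t| < |x| → F t x = 0) :
    ∃ C : ℝ, ∀ t x : ℝ, |F t x| ≤ C := by
  have wave : IsWave W 0 R F := ⟨hF, fun t x => (heq t x).trans (add_zero _).symm, hsupp⟩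
  obtain ⟨K, integral_sq_le⟩ := wave.exists_integral_sq_le hWc hW hW'
  refine ⟨√(K + waveEnergy W 0 F 0), fun t x => Real.abs_le_sqrt ?_⟩
  have hFt : ContDiff ℝ 1 (F t) := (hF.comp (contDiff_prodMk_right t)).of_le one_le_two
  calc F t x ^ 2 ≤ ∫ y, (F t y ^ 2 + spaceDeriv F t y ^ 2) :=
        sq_le_integral_sq_add_deriv_sq hFt (wave.supportedInCone.hasCompactSupport t) x
    _ = (∫ y, F t y ^ 2) + ∫ y, spaceDeriv F t y ^ 2 :=
        integral_add (wave.integrable_sq t) (wave.integrable_spaceDeriv_sq t)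
    _ ≤ K + waveEnergy W 0 F 0 :=
        add_le_add (integral_sq_le t) (wave.integral_spaceDeriv_sq_le hWc hW t)

section ReissnerNordstrom

variable {m : ℝ} {σ : ℝ → ℝ}

lemma sub_le_tortoise_sub_tortoise (hm : 0 < m) {a b : ℝ} (ha : 0 < a) (hab : a ≤ b) :
    b - a ≤ tortoise m b - tortoise m a := by
  have inv_le : m ^ 2 / b ≤ m ^ 2 / a := by gcongr
  have log_le : 2 * m * Real.log (a / m) ≤ 2 * m * Real.log (b / m) := by gcongr
  unfold tortoise
  linarith

lemma continuous_of_tortoise_rightInverse (hm : 0 < m) (hσpos : ∀ x, 0 < σ x)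
    (hσ : RightInverse σ (tortoise m)) : Continuous σ := by
  refine (LipschitzWith.of_le_add fun x y => ?_).continuous
  obtain h | h := le_total (σ x) (σ y)
  · exact h.trans (le_add_of_nonneg_right dist_nonneg)
  · have := sub_le_tortoise_sub_tortoise hm (hσpos y) h
    rw [hσ, hσ] at this
    linarith [Real.dist_eq x y, le_abs_self (x - y)]

lemma continuousOn_V1 (hm : 0 < m) : ContinuousOn (V1 m) (Ioi 0) :=
  ContinuousOn.div (by fun_prop) (by fun_prop) fun ρ (hρ : 0 < ρ) => by positivity

lemma continuousOn_V2 (hm : 0 < m) : ContinuousOn (V2 m) (Ioi 0) :=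
  ContinuousOn.div (by fun_prop) (by fun_prop) fun ρ (hρ : 0 < ρ) => by positivity

lemma V1_pos (hm : 0 < m) {ρ : ℝ} (hρ : 0 < ρ) : 0 < V1 m ρ := by
  unfold V1; positivity

lemma V2_nonneg (m ρ : ℝ) : 0 ≤ V2 m ρ := by
  unfold V2; positivity

lemma continuous_V1_add_mul_V2 (hm : 0 < m) (hσpos : ∀ x, 0 < σ x)
    (hσ : RightInverse σ (tortoise m)) (c : ℝ) :
    Continuous fun x => V1 m (σ x) + c * V2 m (σ x) := by
  have hσc := continuous_of_tortoise_rightInverse hm hσpos hσ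
  exact ((continuousOn_V1 hm).comp_continuous hσc hσpos).add
    (((continuousOn_V2 hm).comp_continuous hσc hσpos).const_mul c)

lemma V1_add_mul_V2_pos (hm : 0 < m) {ρ c : ℝ} (hρ : 0 < ρ) (hc : 0 ≤ c) :
    0 < V1 m ρ + c * V2 m ρ :=
  add_pos_of_pos_of_nonneg (V1_pos hm hρ) (mul_nonneg hc (V2_nonneg m ρ))

end ReissnerNordstrom

/-- Mode version of Theorem 1 of the paper: a smooth solution `F` of the `ℓ`-mode wave
equation `∂²F/∂t² = ∂²F/∂x² - W_ℓ(x)·F`, evolving from compactly supported data in the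
sense that `F(t,x) = 0` whenever `|x| ≥ R + |t|`, is uniformly bounded:
there is a constant `C`, depending only on `F`, with `|F(t,x)| ≤ C` for all `(t,x)`. -/
theorem mode_uniform_bound (m : ℝ) (hm : 0 < m) (ℓ : ℕ)
    (σ : ℝ → ℝ) (hσpos : ∀ x : ℝ, 0 < σ x) (hσ : ∀ x : ℝ, tortoise m (σ x) = x)
    (W : ℝ → ℝ) (hW : ∀ x : ℝ, W x = V1 m (σ x) + (ℓ : ℝ) * ((ℓ : ℝ) + 1) * V2 m (σ x))
    (F : ℝ → ℝ → ℝ) (hF : ContDiff ℝ (⊤ : ℕ∞) (Function.uncurry F))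
    (heq : ∀ t x : ℝ, deriv (deriv (fun τ => F τ x)) t = deriv (deriv (F t)) x - W x * F t x)
    (R : ℝ) (hR : 0 < R) (hsupp : ∀ t x : ℝ, R + |t| ≤ |x| → F t x = 0) :
    ∃ C : ℝ, ∀ t x : ℝ, |F t x| ≤ C := by
  have hWc : Continuous W := funext hW ▸ continuous_V1_add_mul_V2 hm hσpos hσ _
  have hWpos (x : ℝ) : 0 < W x := hW x ▸ V1_add_mul_V2_pos hm (hσpos x) (by positivity)
  have hW_ne : W ≠ 0 := fun h => (hWpos 0).ne' (congrFun h 0)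
  exact mode_uniform_bound_general hWc (fun x => (hWpos x).le) hW_ne (contDiff_infty.1 hF 2) heq
    fun t x htx => hsupp t x htx.le
end

section
/- The second transverse derivative of Φ at the horizon satisfies the evolution equation ∂_v(∂²_rΦ)(v, m) = (2/m²)·∂_vΦ(v, m) − (1/m²)·∂_rΦ(v, m) for every v ∈ ℝ. -/
/-!
At the horizon the coefficient of `∂_r²Φ` vanishes to second order and that of `∂_rΦ` to first
order. The wave equation at `r = m` therefore reads `∂_v H₀ = 0`, and its `r`-derivative there
involves no third transverse derivative: up to multiples of `∂_v H₀` it says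
`2 ∂_v∂_r²Φ + (2/m²) ∂_rΦ - (4/m²) ∂_vΦ = 0`.
-/

open Filter Function Topology

section PartialDerivatives

variable {𝕜 : Type*} [NontriviallyNormedField 𝕜] {E : Type*} [NormedAddCommGroup E]
  [NormedSpace 𝕜 E]

theorem hasDerivAt_smul_of_eq_zero {c : 𝕜 → 𝕜} {c' a : 𝕜} {f : 𝕜 → E} (hc : HasDerivAt c c' a)
    (hca : c a = 0) (hf : ContinuousAt f a) : HasDerivAt (fun x => c x • f x) (c' • f a) a := by
  rw [hasDerivAt_iff_tendsto_slope] at hc ⊢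
  have hslope : slope (fun x => c x • f x) a = fun x => slope c a x • f x := by
    ext x
    simp [slope, hca, smul_smul]
  rw [hslope]
  exact hc.smul (hf.tendsto.mono_left nhdsWithin_le_nhds)

variable {F : 𝕜 → 𝕜 → E} {a b : 𝕜}

theorem hasDerivAt_left_of_differentiableAt_uncurry
    (hF : DifferentiableAt 𝕜 (uncurry F) (a, b)) :
    HasDerivAt (F · b) (fderiv 𝕜 (uncurry F) (a, b) (1, 0)) a :=
  hF.hasFDerivAt.comp_hasDerivAt (f := (·, b)) a ((hasDerivAt_id a).prodMk (hasDerivAt_const a b))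

theorem hasDerivAt_right_of_differentiableAt_uncurry
    (hF : DifferentiableAt 𝕜 (uncurry F) (a, b)) :
    HasDerivAt (F a) (fderiv 𝕜 (uncurry F) (a, b) (0, 1)) b :=
  hF.hasFDerivAt.comp_hasDerivAt (f := (a, ·)) b ((hasDerivAt_const b a).prodMk (hasDerivAt_id b))

theorem eventually_differentiableAt_of_contDiffAt {X : Type*} [NormedAddCommGroup X]
    [NormedSpace 𝕜 X] {f : X → E} {x : X} (hf : ContDiffAt 𝕜 1 f x) :
    ∀ᶠ y in 𝓝 x, DifferentiableAt 𝕜 f y :=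
  (hf.eventually (by simp)).mono fun _ hy => hy.differentiableAt one_ne_zero

theorem contDiffAt_uncurry_deriv_right {k n : WithTop ℕ∞} (hF : ContDiffAt 𝕜 n (uncurry F) (a, b))
    (hkn : k + 1 ≤ n) : ContDiffAt 𝕜 k (uncurry fun x y => deriv (F x) y) (a, b) := by
  have hdiff := eventually_differentiableAt_of_contDiffAt (hF.of_le (le_add_self.trans hkn))
  refine ((hF.fderiv_right hkn).clm_apply (contDiffAt_const (c := (0, 1)))).congr_of_eventuallyEq ?_
  filter_upwards [hdiff] with p hp
  exact (hasDerivAt_right_of_differentiableAt_uncurry hp).deriv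

theorem hasDerivAt_deriv_left {n : WithTop ℕ∞} (hF : ContDiffAt 𝕜 n (uncurry F) (a, b))
    (hn : minSmoothness 𝕜 2 ≤ n) :
    HasDerivAt (fun y => deriv (F · y) a) (deriv (fun x => deriv (F x) b) a) b := by
  have hn' : (1 : WithTop ℕ∞) + 1 ≤ n := by
    simpa [one_add_one_eq_two] using le_minSmoothness.trans hn
  have hdiff := eventually_differentiableAt_of_contDiffAt (hF.of_le (le_add_self.trans hn'))
  have hD : DifferentiableAt 𝕜 (fderiv 𝕜 (uncurry F)) (a, b) :=
    (hF.fderiv_right hn').differentiableAt one_ne_zero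
  have hleft : HasDerivAt (fun y => deriv (F · y) a)
      (fderiv 𝕜 (fderiv 𝕜 (uncurry F)) (a, b) (0, 1) (1, 0)) b := by
    have hfderiv := (hasDerivAt_right_of_differentiableAt_uncurry
      (F := curry (fderiv 𝕜 (uncurry F))) hD).clm_apply (hasDerivAt_const b ((1, 0) : 𝕜 × 𝕜))
    simp only [map_zero, add_zero] at hfderiv
    refine hfderiv.congr_of_eventuallyEq ?_
    filter_upwards [(Continuous.prodMk_right a).tendsto b |>.eventually hdiff] with y hy
    exact (hasDerivAt_left_of_differentiableAt_uncurry hy).deriv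
  have hright : HasDerivAt (fun x => deriv (F x) b)
      (fderiv 𝕜 (fderiv 𝕜 (uncurry F)) (a, b) (1, 0) (0, 1)) a := by
    have hfderiv := (hasDerivAt_left_of_differentiableAt_uncurry
      (F := curry (fderiv 𝕜 (uncurry F))) hD).clm_apply (hasDerivAt_const a ((0, 1) : 𝕜 × 𝕜))
    simp only [map_zero, add_zero] at hfderiv
    refine hfderiv.congr_of_eventuallyEq ?_
    filter_upwards [(Continuous.prodMk_left b).tendsto a |>.eventually hdiff] with x hx
    exact (hasDerivAt_right_of_differentiableAt_uncurry hx).deriv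
  rw [hright.deriv, hF.isSymmSndFDerivAt hn (1, 0) (0, 1)]
  exact hleft

end PartialDerivatives

section ExtremeReissnerNordstrom

variable {E : Type*} [NormedAddCommGroup E] [NormedSpace ℝ E] {m v : ℝ} {Φ : ℝ → ℝ → E}

/-- The wave operator of extreme Reissner–Nordström of mass `m` on spherically symmetric fields
`Φ(v, r)`, in ingoing Eddington–Finkelstein coordinates. Values in a real normed space are allowed,
so as to include complex fields. -/
noncomputable def waveOperator (m : ℝ) (Φ : ℝ → ℝ → E) (v r : ℝ) : E :=
  ((r - m) / r) ^ 2 • deriv (deriv (Φ v)) r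
    + (2 * ((r - m) / r ^ 2)) • deriv (Φ v) r
    + (2 : ℝ) • deriv (fun w => deriv (Φ w) r) v
    + (2 / r) • deriv (fun w => Φ w r) v

/-- The Aretakis quantity `H₀(v) = ∂_rΦ(v, m) + Φ(v, m) / m` on the horizon `r = m`, which the wave
equation conserves. -/
noncomputable def aretakisQuantity (m : ℝ) (Φ : ℝ → ℝ → E) (v : ℝ) : E :=
  deriv (Φ v) m + m⁻¹ • Φ v m

theorem deriv_aretakisQuantity (hΦ : ContDiffAt ℝ 2 (uncurry Φ) (v, m)) :
    deriv (aretakisQuantity m Φ) v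
      = deriv (fun w => deriv (Φ w) m) v + m⁻¹ • deriv (fun w => Φ w m) v := by
  have hΦr : ContDiffAt ℝ 1 (uncurry fun w r => deriv (Φ w) r) (v, m) :=
    contDiffAt_uncurry_deriv_right hΦ one_add_one_eq_two.le
  have hdΦ := hasDerivAt_left_of_differentiableAt_uncurry (hΦ.differentiableAt two_ne_zero)
  have hdΦr := hasDerivAt_left_of_differentiableAt_uncurry (hΦr.differentiableAt one_ne_zero)
  rw [hdΦ.deriv, hdΦr.deriv]
  exact (hdΦr.add (hdΦ.const_smul m⁻¹)).deriv

theorem waveOperator_horizon (hΦ : ContDiffAt ℝ 2 (uncurry Φ) (v, m)) :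
    waveOperator m Φ v m = (2 : ℝ) • deriv (aretakisQuantity m Φ) v := by
  rw [deriv_aretakisQuantity hΦ]
  simp [waveOperator, smul_smul, div_eq_mul_inv]

theorem hasDerivAt_waveOperator_horizon (hm : m ≠ 0) (hΦ : ContDiffAt ℝ 3 (uncurry Φ) (v, m)) :
    HasDerivAt (waveOperator m Φ v)
      ((2 : ℝ) • deriv (fun w => deriv (deriv (Φ w)) m) v + (2 / m ^ 2) • deriv (Φ v) m
        - (4 / m ^ 2) • deriv (fun w => Φ w m) v + (2 / m) • deriv (aretakisQuantity m Φ) v) m := by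
  have hΦ₂ : ContDiffAt ℝ 2 (uncurry Φ) (v, m) := hΦ.of_le (by norm_num)
  have hΦr : ContDiffAt ℝ 2 (uncurry fun w r => deriv (Φ w) r) (v, m) :=
    contDiffAt_uncurry_deriv_right hΦ (by norm_num)
  have hΦrr : ContDiffAt ℝ 1 (uncurry fun w r => deriv (deriv (Φ w)) r) (v, m) :=
    contDiffAt_uncurry_deriv_right hΦr one_add_one_eq_two.le
  have hsub : HasDerivAt (fun r => r - m) 1 m := (hasDerivAt_id m).sub_const m
  have hcoeff_rr : HasDerivAt (fun r => ((r - m) / r) ^ 2) 0 m :=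
    ((hsub.div (hasDerivAt_id m) hm).pow 2).congr_deriv (by simp)
  have hcoeff_r : HasDerivAt (fun r => 2 * ((r - m) / r ^ 2)) (2 / m ^ 2) m := by
    refine ((hsub.div (hasDerivAt_pow 2 m) (pow_ne_zero 2 hm)).const_mul 2).congr_deriv ?_
    field_simp
    ring
  have hcoeff_v : HasDerivAt (fun r => 2 / r) (-2 / m ^ 2) m :=
    ((hasDerivAt_const m (2 : ℝ)).div (hasDerivAt_id m) hm).congr_deriv (by simp)
  have hterm_rr := hasDerivAt_smul_of_eq_zero hcoeff_rr (by simp)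
    (hasDerivAt_right_of_differentiableAt_uncurry (hΦrr.differentiableAt one_ne_zero)).continuousAt
  have hterm_r := hasDerivAt_smul_of_eq_zero hcoeff_r (by simp)
    (hasDerivAt_right_of_differentiableAt_uncurry (hΦr.differentiableAt two_ne_zero)).continuousAt
  have hterm_vr := (hasDerivAt_deriv_left hΦr (by simp)).const_smul (2 : ℝ)
  have hterm_v := hcoeff_v.smul (hasDerivAt_deriv_left hΦ₂ (by simp))
  refine (((hterm_rr.add hterm_r).add hterm_vr).add hterm_v).congr_deriv ?_
  rw [deriv_aretakisQuantity hΦ₂]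
  module

theorem deriv_aretakisQuantity_eq_zero (hΦ : ContDiffAt ℝ 2 (uncurry Φ) (v, m))
    (hwave : waveOperator m Φ v m = 0) : deriv (aretakisQuantity m Φ) v = 0 := by
  rw [waveOperator_horizon hΦ] at hwave
  exact (smul_eq_zero_iff_right two_ne_zero).mp hwave

theorem second_transverse_derivative_evolution_general (hm : m ≠ 0)
    (hΦ : ContDiffAt ℝ 3 (uncurry Φ) (v, m))
    (hwave : ∀ᶠ r in 𝓝 m, waveOperator m Φ v r = 0) :
    deriv (fun w => deriv (deriv (Φ w)) m) v
      = (2 / m ^ 2) • deriv (fun w => Φ w m) v - (1 / m ^ 2) • deriv (Φ v) m := by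
  have hconserved : deriv (aretakisQuantity m Φ) v = 0 :=
    deriv_aretakisQuantity_eq_zero (hΦ.of_le (by norm_num)) hwave.self_of_nhds
  have htransverse := (hasDerivAt_waveOperator_horizon hm hΦ).unique
    ((hasDerivAt_const m 0).congr_of_eventuallyEq hwave)
  rw [hconserved, smul_zero, add_zero] at htransverse
  linear_combination (norm := module) (1 / 2 : ℝ) • htransverse

end ExtremeReissnerNordstrom

/-- Evolution equation for the second transverse derivative at the horizon of the
extreme Reissner–Nordström black hole: for a smooth spherically symmetric solution
of the wave equation in ingoing Eddington–Finkelstein coordinates,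
`∂_v(∂²_rΦ)(v,m) = (2/m²)·∂_vΦ(v,m) - (1/m²)·∂_rΦ(v,m)` for every `v`. -/
theorem second_transverse_derivative_evolution (m : ℝ) (hm : 0 < m)
    (Φ : ℝ → ℝ → ℝ) (hΦ : ContDiff ℝ (⊤ : ℕ∞) (Function.uncurry Φ))
    (hwave : ∀ v r : ℝ, 0 < r →
      ((r - m) / r) ^ 2 * deriv (deriv (Φ v)) r
        + 2 * ((r - m) / r ^ 2) * deriv (Φ v) r
        + 2 * deriv (fun w => deriv (Φ w) r) v
        + (2 / r) * deriv (fun w => Φ w r) v = 0) :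
    ∀ v : ℝ, deriv (fun w => deriv (deriv (Φ w)) m) v
      = (2 / m ^ 2) * deriv (fun w => Φ w m) v - (1 / m ^ 2) * deriv (Φ v) m := fun v =>
  second_transverse_derivative_evolution_general hm.ne'
    (hΦ.contDiffAt.of_le (WithTop.coe_le_coe.2 le_top))
    ((lt_mem_nhds hm).mono fun r hr => hwave v r hr)
end
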